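/- arXiv:2105.12272 — 5 statements merged into one kernel-verified Lean document; each statement's English description precedes it below -/
import Mathlib

section
/- Behavioral cloning performance bound: Let π and π* be any two policies in a finite MDP, and suppose π(a|s) > 0 for every state s with d^{π*}(s) > 0 and every action a with π*(a|s) > 0. Then PerfDiff(π, π*) ≤ (R_max/(1−γ)²) · √( 2 · ∑_{s∈S} d^{π*}(s) · D_KL(π*(·|s) ‖ π(·|s)) ). -/
open Finset

noncomputable section

variable {S A Z : Type*}

/-- State distribution at time `t` when following policy `π` from initial distribution `μ`. -/
def stateDist [Fintype S] [Fintype A] (P : S → A → S → ℝ) (π : S → A → ℝ)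
    (μ : S → ℝ) : ℕ → S → ℝ
  | 0 => μ
  | t + 1 => fun s' => ∑ s : S, ∑ a : A, π s a * P s a s' * stateDist P π μ t s

/-- Discounted visitation distribution `d^π`. -/
def visitation [Fintype S] [Fintype A] (P : S → A → S → ℝ) (π : S → A → ℝ)
    (μ : S → ℝ) (γ : ℝ) (s : S) : ℝ :=
  (1 - γ) * ∑' t : ℕ, γ ^ t * stateDist P π μ t s

/-- Performance `J(π)`. -/
def perf [Fintype S] [Fintype A] (P : S → A → S → ℝ) (R : S → A → ℝ)
    (π : S → A → ℝ) (μ : S → ℝ) (γ : ℝ) : ℝ :=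
  ∑' t : ℕ, γ ^ t * ∑ s : S, ∑ a : A, R s a * π s a * stateDist P π μ t s

/-- `PerfDiff(π, π')`. -/
def perfDiff [Fintype S] [Fintype A] (P : S → A → S → ℝ) (R : S → A → ℝ)
    (μ : S → ℝ) (γ : ℝ) (π π' : S → A → ℝ) : ℝ :=
  |perf P R π μ γ - perf P R π' μ γ|

/-- Total variation distance. -/
def dTV {X : Type*} [Fintype X] (p q : X → ℝ) : ℝ :=
  (1 / 2) * ∑ x : X, |p x - q x|

/-- KL divergence. -/
def dKL {X : Type*} [Fintype X] (p q : X → ℝ) : ℝ :=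
  ∑ x : X, p x * Real.log (p x / q x)

/-- Pearson chi-squared divergence (terms with `q x = 0` vanish by the `x / 0 = 0` convention). -/
def dChi2 {X : Type*} [Fintype X] (p q : X → ℝ) : ℝ :=
  ∑ x : X, (p x - q x) ^ 2 / q x

/-- `Err_ρ(π1, π2, F)` for a reward-like function `F`. -/
def errF [Fintype S] [Fintype A] (ρ : S → ℝ) (π1 π2 : S → A → ℝ) (F : S → A → ℝ) : ℝ :=
  |∑ s : S, ρ s * ∑ a : A, (π1 s a - π2 s a) * F s a|

/-- `Err_ρ(π1, π2, G)` for a transition-like function `G`. -/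
def errG [Fintype S] [Fintype A] (ρ : S → ℝ) (π1 π2 : S → A → ℝ) (G : S → A → S → ℝ) : ℝ :=
  ∑ s' : S, |∑ s : S, ρ s * ∑ a : A, (π1 s a - π2 s a) * G s a s'|

/-- Marginalization `ρ_Z` of a state distribution onto `Z` via `φ`. -/
def margDist [Fintype S] [DecidableEq Z] (φ : S → Z) (ρ : S → ℝ) (z : Z) : ℝ :=
  ∑ s : S, if φ s = z then ρ s else 0

/-- Marginalization `π_Z` of a policy onto `Z` via `φ`, w.r.t. the state distribution `ρ`
(by the `x / 0 = 0` convention it takes a fixed arbitrary value when `ρ_Z(z) = 0`). -/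
def margPolicy [Fintype S] [DecidableEq Z] (φ : S → Z) (ρ : S → ℝ) (π : S → A → ℝ)
    (z : Z) (a : A) : ℝ :=
  (∑ s : S, if φ s = z then ρ s * π s a else 0) / margDist φ ρ z

/-- Log-linear (softmax) policy `π_θ(a|z)`. -/
def softmaxPol {d : ℕ} [Fintype A] (θ : A → Fin d → ℝ) (z : Fin d → ℝ) (a : A) : ℝ :=
  Real.exp (∑ i, θ a i * z i) / ∑ b : A, Real.exp (∑ i, θ b i * z i)

/-- Sum of absolute values of all partial derivatives of `L : ℝ^{d×|A|} → ℝ` at `θ`. -/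
def gradL1 {d : ℕ} [Fintype A] [DecidableEq A] (L : (A → Fin d → ℝ) → ℝ)
    (θ : A → Fin d → ℝ) : ℝ :=
  ∑ a : A, ∑ i : Fin d, |fderiv ℝ L θ (Pi.single a (Pi.single i 1))|

lemma aux_hasDeriv (t : ℝ) (ht : 0 < t) :
    HasDerivAt (fun t : ℝ => Real.log t - (5 * t ^ 2 - 4 * t - 1) / (2 * t ^ 2 + 4 * t))
      ((t - 1) ^ 3 / (t ^ 2 * (t + 2) ^ 2)) t := by
  have h1 := Real.hasDerivAt_log ht.ne'
  have hn : HasDerivAt (fun t : ℝ => 5 * t ^ 2 - 4 * t - 1) (10 * t - 4) t := by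
    have := ((((hasDerivAt_id t).pow 2).const_mul 5).sub ((hasDerivAt_id t).const_mul 4)).sub_const 1
    exact this.congr_deriv (by simp; ring)
  have hd : HasDerivAt (fun t : ℝ => 2 * t ^ 2 + 4 * t) (4 * t + 4) t := by
    have := (((hasDerivAt_id t).pow 2).const_mul 2).add ((hasDerivAt_id t).const_mul 4)
    exact this.congr_deriv (by simp; ring)
  have hne : 2 * t ^ 2 + 4 * t ≠ 0 := by positivity
  refine (h1.sub (hn.div hd hne)).congr_deriv ?_
  have : t + 2 ≠ 0 := by positivity
  have h3 : 2 * t ^ 2 + 4 * t = 2 * (t * (t + 2)) := by ring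
  rw [h3]
  field_simp
  ring

lemma aux_log (t : ℝ) (ht : 0 < t) :
    (5 * t ^ 2 - 4 * t - 1) / (2 * t ^ 2 + 4 * t) ≤ Real.log t := by
  set g : ℝ → ℝ := fun t : ℝ => Real.log t - (5 * t ^ 2 - 4 * t - 1) / (2 * t ^ 2 + 4 * t) with hg
  have hg1 : g 1 = 0 := by simp [hg]; norm_num
  suffices h : 0 ≤ g t by simpa [hg] using h
  rw [← hg1]
  rcases le_total t 1 with h | h
  · have hanti : AntitoneOn g (Set.Icc t 1) := by
      apply antitoneOn_of_deriv_nonpos (convex_Icc t 1)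
      · intro x hx
        exact (aux_hasDeriv x (lt_of_lt_of_le ht hx.1)).continuousAt.continuousWithinAt
      · intro x hx
        rw [interior_Icc] at hx
        exact (aux_hasDeriv x (lt_trans ht hx.1)).differentiableAt.differentiableWithinAt
      · intro x hx
        rw [interior_Icc] at hx
        rw [(aux_hasDeriv x (lt_trans ht hx.1)).deriv]
        apply div_nonpos_of_nonpos_of_nonneg _ (by positivity)
        have : (x - 1) ^ 3 = (x - 1) ^ 2 * (x - 1) := by ring
        rw [this]
        exact mul_nonpos_of_nonneg_of_nonpos (sq_nonneg _) (by linarith [hx.2])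
    exact hanti ⟨le_refl _, h⟩ ⟨h, le_refl _⟩ h
  · have hmono : MonotoneOn g (Set.Icc 1 t) := by
      apply monotoneOn_of_deriv_nonneg (convex_Icc 1 t)
      · intro x hx
        exact (aux_hasDeriv x (lt_of_lt_of_le one_pos hx.1)).continuousAt.continuousWithinAt
      · intro x hx
        rw [interior_Icc] at hx
        exact (aux_hasDeriv x (lt_trans one_pos hx.1)).differentiableAt.differentiableWithinAt
      · intro x hx
        rw [interior_Icc] at hx
        rw [(aux_hasDeriv x (lt_trans one_pos hx.1)).deriv]
        have : 0 ≤ x - 1 := by linarith [hx.1]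
        positivity
    exact hmono ⟨le_refl _, h⟩ ⟨h, le_refl _⟩ h

lemma aux_point (p q : ℝ) (hp : 0 ≤ p) (hq : 0 ≤ q) (h : 0 < p → 0 < q) :
    0 ≤ p * Real.log (p / q) - p + q ∧
    |p - q| ^ 2 ≤ (2 / 3 * p + 4 / 3 * q) * (p * Real.log (p / q) - p + q) := by
  rw [sq_abs]
  rcases hp.eq_or_lt with rfl | hp
  · simp only [zero_div, Real.log_zero]
    constructor <;> nlinarith
  · have hq := h hp
    have hl := aux_log (p / q) (div_pos hp hq)
    have he : (5 * (p / q) ^ 2 - 4 * (p / q) - 1) / (2 * (p / q) ^ 2 + 4 * (p / q))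
        = (p - q) * (5 * p + q) / (2 * p * (p + 2 * q)) := by
      have : 2 * (p / q) ^ 2 + 4 * (p / q) = 2 * p * (p + 2 * q) / q ^ 2 := by
        field_simp; ring
      rw [this]
      field_simp
      ring
    rw [he] at hl
    have h2 : (p - q) * (5 * p + q) / (2 * (p + 2 * q)) ≤ p * Real.log (p / q) := by
      calc _ = p * ((p - q) * (5 * p + q) / (2 * p * (p + 2 * q))) := by field_simp
        _ ≤ _ := by gcongr
    have h3 : 3 * (p - q) ^ 2 / (2 * (p + 2 * q)) ≤ p * Real.log (p / q) - p + q := by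
      have : 3 * (p - q) ^ 2 / (2 * (p + 2 * q))
        = (p - q) * (5 * p + q) / (2 * (p + 2 * q)) - p + q := by
        field_simp; ring
      rw [this]; linarith
    refine ⟨le_trans (by positivity) h3, ?_⟩
    calc (p - q) ^ 2 = (2 / 3 * p + 4 / 3 * q) * (3 * (p - q) ^ 2 / (2 * (p + 2 * q))) := by
          field_simp
          ring
      _ ≤ _ := by gcongr

lemma aux_pinsker [Fintype A] (p q : A → ℝ) (hp : ∀ a, 0 ≤ p a) (hq : ∀ a, 0 ≤ q a)
    (hp1 : ∑ a, p a = 1) (hq1 : ∑ a, q a = 1) (h : ∀ a, 0 < p a → 0 < q a) :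
    (∑ a, |p a - q a|) ^ 2 ≤ 2 * dKL p q := by
  have := Finset.sum_sq_le_sum_mul_sum_of_sq_le_mul (Finset.univ : Finset A)
    (r := fun a => |p a - q a|) (f := fun a => 2 / 3 * p a + 4 / 3 * q a)
    (g := fun a => p a * Real.log (p a / q a) - p a + q a)
    (fun a _ => by have := hp a; have := hq a; positivity)
    (fun a _ => (aux_point _ _ (hp a) (hq a) (h a)).1)
    (fun a _ => (aux_point _ _ (hp a) (hq a) (h a)).2)
  refine this.trans (le_of_eq ?_)
  rw [Finset.sum_add_distrib, Finset.sum_add_distrib, Finset.sum_sub_distrib, ← Finset.mul_sum,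
    ← Finset.mul_sum, hp1, hq1]
  unfold dKL
  ring

lemma aux_diff [Fintype S] [Fintype A] (f : S → A → ℝ) (π πs : S → A → ℝ) (d ds : S → ℝ)
    (hπ : ∀ s a, 0 ≤ π s a) (hds : ∀ s, 0 ≤ ds s) :
    |∑ s, ∑ a, f s a * π s a * d s - ∑ s, ∑ a, f s a * πs s a * ds s| ≤
      ∑ s, ∑ a, |f s a| * (π s a * |d s - ds s| + |πs s a - π s a| * ds s) := by
  rw [← Finset.sum_sub_distrib]
  refine (Finset.abs_sum_le_sum_abs _ _).trans (Finset.sum_le_sum fun s _ => ?_)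
  rw [← Finset.sum_sub_distrib]
  refine (Finset.abs_sum_le_sum_abs _ _).trans (Finset.sum_le_sum fun a _ => ?_)
  have : f s a * π s a * d s - f s a * πs s a * ds s
      = f s a * (π s a * (d s - ds s) - (πs s a - π s a) * ds s) := by ring
  rw [this, abs_mul]
  gcongr
  refine (abs_sub _ _).trans ?_
  rw [abs_mul, abs_mul, abs_of_nonneg (hπ s a), abs_of_nonneg (hds s)]

lemma aux_sum [Fintype S] [Fintype A] (π πs : S → A → ℝ) (d ds : S → ℝ)
    (hπ1 : ∀ s, ∑ a, π s a = 1) :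
    ∑ s, ∑ a, (π s a * |d s - ds s| + |πs s a - π s a| * ds s) =
      ∑ s, |d s - ds s| + ∑ s, ds s * ∑ a, |πs s a - π s a| := by
  rw [← Finset.sum_add_distrib]
  refine Finset.sum_congr rfl fun s _ => ?_
  rw [Finset.sum_add_distrib, ← Finset.sum_mul, ← Finset.sum_mul, hπ1]
  ring

lemma aux_sd_nonneg [Fintype S] [Fintype A] (P : S → A → S → ℝ) (hP0 : ∀ s a s', 0 ≤ P s a s')
    (μ : S → ℝ) (hμ0 : ∀ s, 0 ≤ μ s) (π : S → A → ℝ) (hπ0 : ∀ s a, 0 ≤ π s a) (t : ℕ) :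
    ∀ s, 0 ≤ stateDist P π μ t s := by
  induction t with
  | zero => exact hμ0
  | succ t ih =>
    intro s
    exact Finset.sum_nonneg fun s' _ => Finset.sum_nonneg fun a _ =>
      mul_nonneg (mul_nonneg (hπ0 _ _) (hP0 _ _ _)) (ih _)

lemma aux_sd_sum [Fintype S] [Fintype A] (P : S → A → S → ℝ)
    (hP1 : ∀ s a, ∑ s' : S, P s a s' = 1)
    (μ : S → ℝ) (hμ1 : ∑ s : S, μ s = 1) (π : S → A → ℝ) (hπ1 : ∀ s, ∑ a : A, π s a = 1) (t : ℕ) :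
    ∑ s, stateDist P π μ t s = 1 := by
  induction t with
  | zero => exact hμ1
  | succ t ih =>
    simp only [stateDist]
    rw [Finset.sum_comm, ← ih]
    refine Finset.sum_congr rfl fun s _ => ?_
    rw [Finset.sum_comm]
    have : ∀ a, ∑ s', π s a * P s a s' * stateDist P π μ t s = π s a * stateDist P π μ t s := by
      intro a
      rw [← Finset.sum_mul, ← Finset.mul_sum, hP1, mul_one]
    simp only [this]
    rw [← Finset.sum_mul, hπ1, one_mul]

lemma aux_step [Fintype S] [Fintype A] (P : S → A → S → ℝ) (hP0 : ∀ s a s', 0 ≤ P s a s')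
    (hP1 : ∀ s a, ∑ s' : S, P s a s' = 1)
    (μ : S → ℝ) (hμ0 : ∀ s, 0 ≤ μ s) (π πs : S → A → ℝ)
    (hπ0 : ∀ s a, 0 ≤ π s a) (hπ1 : ∀ s, ∑ a : A, π s a = 1) (hπs0 : ∀ s a, 0 ≤ πs s a) (t : ℕ) :
    ∑ s, |stateDist P π μ (t + 1) s - stateDist P πs μ (t + 1) s| ≤
      ∑ s, |stateDist P π μ t s - stateDist P πs μ t s| +
        ∑ s, stateDist P πs μ t s * ∑ a, |πs s a - π s a| := by
  rw [← aux_sum π πs _ _ hπ1]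
  have h1 : ∀ s', |stateDist P π μ (t + 1) s' - stateDist P πs μ (t + 1) s'| ≤
      ∑ s, ∑ a, P s a s' * (π s a * |stateDist P π μ t s - stateDist P πs μ t s| +
        |πs s a - π s a| * stateDist P πs μ t s) := by
    intro s'
    have := aux_diff (fun s a => P s a s') π πs (stateDist P π μ t) (stateDist P πs μ t) hπ0
      (aux_sd_nonneg P hP0 μ hμ0 πs hπs0 t)
    simp only [abs_of_nonneg (hP0 _ _ _)] at this
    simp only [stateDist]
    simpa only [mul_comm (P _ _ _) (π _ _), mul_comm (P _ _ _) (πs _ _)] using this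
  refine (Finset.sum_le_sum fun s' _ => h1 s').trans (le_of_eq ?_)
  rw [Finset.sum_comm]
  refine Finset.sum_congr rfl fun s _ => ?_
  rw [Finset.sum_comm]
  refine Finset.sum_congr rfl fun a _ => ?_
  rw [← Finset.sum_mul, hP1, one_mul]

theorem bc_performance_bound [Fintype S] [Fintype A] [Nonempty S] [Nonempty A]
    (P : S → A → S → ℝ) (hP0 : ∀ s a s', 0 ≤ P s a s')
    (hP1 : ∀ s a, ∑ s' : S, P s a s' = 1)
    (R : S → A → ℝ) (Rmax : ℝ) (hRmax : 0 ≤ Rmax) (hR : ∀ s a, |R s a| ≤ Rmax)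
    (μ : S → ℝ) (hμ0 : ∀ s, 0 ≤ μ s) (hμ1 : ∑ s : S, μ s = 1)
    (γ : ℝ) (hγ0 : 0 ≤ γ) (hγ1 : γ < 1)
    (π πstar : S → A → ℝ)
    (hπ0 : ∀ s a, 0 ≤ π s a) (hπ1 : ∀ s, ∑ a : A, π s a = 1)
    (hπs0 : ∀ s a, 0 ≤ πstar s a) (hπs1 : ∀ s, ∑ a : A, πstar s a = 1)
    (hpos : ∀ s a, 0 < visitation P πstar μ γ s → 0 < πstar s a → 0 < π s a) :
    perfDiff P R μ γ π πstar ≤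
      Rmax / (1 - γ) ^ 2 *
        Real.sqrt (2 * ∑ s : S, visitation P πstar μ γ s * dKL (πstar s) (π s)) := by
  have hd0 := aux_sd_nonneg P hP0 μ hμ0 πstar hπs0
  have hd1 := aux_sd_sum P hP1 μ hμ1 πstar hπs1
  have hc0 := aux_sd_nonneg P hP0 μ hμ0 π hπ0
  have hc1 := aux_sd_sum P hP1 μ hμ1 π hπ1
  have hg : 0 < 1 - γ := by linarith
  have hgeo : Summable fun t : ℕ => γ ^ t := summable_geometric_of_lt_one hγ0 hγ1
  -- summability from boundedness
  have hsum : ∀ (x : ℕ → ℝ) (C : ℝ), (∀ t, |x t| ≤ C) → Summable fun t => γ ^ t * x t := by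
    intro x C hx
    refine Summable.of_norm_bounded (hgeo.mul_right C) fun t => ?_
    rw [Real.norm_eq_abs, abs_mul, abs_of_nonneg (pow_nonneg hγ0 t)]
    exact mul_le_mul_of_nonneg_left (hx t) (pow_nonneg hγ0 t)
  set ds := stateDist P πstar μ with hds
  set d := stateDist P π μ with hd
  set ε : S → ℝ := fun s => ∑ a, |πstar s a - π s a| with hε
  set e : ℕ → ℝ := fun t => ∑ s, |d t s - ds t s| with he
  set δ : ℕ → ℝ := fun t => ∑ s, ds t s * ε s with hδ
  have hε0 : ∀ s, 0 ≤ ε s := fun s => Finset.sum_nonneg fun a _ => abs_nonneg _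
  have hε2 : ∀ s, ε s ≤ 2 := by
    intro s
    calc ε s ≤ ∑ a, (πstar s a + π s a) := Finset.sum_le_sum fun a _ => by
          refine (abs_sub _ _).trans ?_
          rw [abs_of_nonneg (hπs0 s a), abs_of_nonneg (hπ0 s a)]
      _ = 2 := by rw [Finset.sum_add_distrib, hπs1, hπ1]; norm_num
  have he0 : ∀ t, 0 ≤ e t := fun t => Finset.sum_nonneg fun a _ => abs_nonneg _
  have he2 : ∀ t, e t ≤ 2 := by
    intro t
    calc e t ≤ ∑ s, (d t s + ds t s) := Finset.sum_le_sum fun s _ => by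
          refine (abs_sub _ _).trans ?_
          rw [abs_of_nonneg (hd0 t s), abs_of_nonneg (hc0 t s)]
      _ = 2 := by rw [Finset.sum_add_distrib, hd1, hc1]; norm_num
  have hδ0 : ∀ t, 0 ≤ δ t := fun t => Finset.sum_nonneg fun s _ => mul_nonneg (hd0 t s) (hε0 s)
  have hδ2 : ∀ t, δ t ≤ 2 := by
    intro t
    calc δ t ≤ ∑ s, ds t s * 2 := Finset.sum_le_sum fun s _ =>
          mul_le_mul_of_nonneg_left (hε2 s) (hd0 t s)
      _ = 2 := by rw [← Finset.sum_mul, hd1]; norm_num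
  have hes : Summable fun t => γ ^ t * e t :=
    hsum e 2 fun t => by rw [abs_of_nonneg (he0 t)]; exact he2 t
  have hδs : Summable fun t => γ ^ t * δ t :=
    hsum δ 2 fun t => by rw [abs_of_nonneg (hδ0 t)]; exact hδ2 t
  have hdss : ∀ s, Summable fun t => γ ^ t * ds t s := fun s =>
    hsum (fun t => ds t s) 1 fun t => by
      rw [abs_of_nonneg (hd0 t s), ← hd1 t]
      exact Finset.single_le_sum (fun i _ => hd0 t i) (Finset.mem_univ s)
  set D := ∑' t, γ ^ t * δ t with hD
  set E := ∑' t, γ ^ t * e t with hE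
  have hstep : ∀ t, e (t + 1) ≤ e t + δ t := fun t =>
    aux_step P hP0 hP1 μ hμ0 π πstar hπ0 hπ1 hπs0 t
  have hE1 : E ≤ γ * (E + D) := by
    have h0 : e 0 = 0 := by simp [he, hd, hds, stateDist]
    have hE' : E = ∑' t, γ ^ (t + 1) * e (t + 1) := by
      rw [hE, hes.tsum_eq_zero_add, h0, mul_zero, zero_add]
    have hED' : γ * (E + D) = ∑' t, γ * (γ ^ t * e t + γ ^ t * δ t) := by
      rw [tsum_mul_left, hes.tsum_add hδs]
    rw [hED', hE']
    refine Summable.tsum_le_tsum (fun t => ?_) ((summable_nat_add_iff 1).2 hes)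
      ((hes.add hδs).mul_left γ)
    calc γ ^ (t + 1) * e (t + 1) ≤ γ ^ (t + 1) * (e t + δ t) :=
          mul_le_mul_of_nonneg_left (hstep t) (pow_nonneg hγ0 _)
      _ = _ := by ring
  -- rewards
  have hrb : ∀ (p : S → A → ℝ) (c : ℕ → S → ℝ), (∀ s a, 0 ≤ p s a) → (∀ s, ∑ a, p s a = 1) →
      (∀ t s, 0 ≤ c t s) → (∀ t, ∑ s, c t s = 1) → ∀ t, |∑ s, ∑ a, R s a * p s a * c t s| ≤ Rmax := by
    intro p c hp0 hp1 hc0 hc1 t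
    calc _ ≤ ∑ s, ∑ a, Rmax * p s a * c t s := by
          refine (Finset.abs_sum_le_sum_abs _ _).trans (Finset.sum_le_sum fun s _ => ?_)
          refine (Finset.abs_sum_le_sum_abs _ _).trans (Finset.sum_le_sum fun a _ => ?_)
          rw [abs_mul, abs_mul, abs_of_nonneg (hp0 s a), abs_of_nonneg (hc0 t s)]
          exact mul_le_mul_of_nonneg_right (mul_le_mul_of_nonneg_right (hR s a) (hp0 s a)) (hc0 t s)
      _ = Rmax := by
          simp only [← Finset.sum_mul, ← Finset.mul_sum, hp1, hc1, mul_one]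
  have hr1 := hsum _ Rmax (hrb π d hπ0 hπ1 hc0 hc1)
  have hr2 := hsum _ Rmax (hrb πstar ds hπs0 hπs1 hd0 hd1)
  have hpd : perfDiff P R μ γ π πstar ≤ Rmax * (E + D) := by
    unfold perfDiff perf
    rw [← hr1.tsum_sub hr2, ← Real.norm_eq_abs, hE, hD, ← hes.tsum_add hδs, ← tsum_mul_left]
    refine tsum_of_norm_bounded ((hes.add hδs).mul_left Rmax).hasSum fun t => ?_
    rw [← mul_sub, Real.norm_eq_abs, abs_mul, abs_of_nonneg (pow_nonneg hγ0 t)]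
    have h1 := aux_diff R π πstar (d t) (ds t) hπ0 (hd0 t)
    have h2 : ∑ s, ∑ a, |R s a| * (π s a * |d t s - ds t s| + |πstar s a - π s a| * ds t s)
        ≤ Rmax * (e t + δ t) := by
      rw [he, hδ, hε]
      simp only
      rw [← aux_sum π πstar (d t) (ds t) hπ1, Finset.mul_sum]
      refine Finset.sum_le_sum fun s _ => ?_
      rw [Finset.mul_sum]
      refine Finset.sum_le_sum fun a _ => ?_
      refine mul_le_mul_of_nonneg_right (hR s a) ?_
      have := hπ0 s a
      have := hd0 t s
      positivity
    calc _ ≤ γ ^ t * (Rmax * (e t + δ t)) :=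
          mul_le_mul_of_nonneg_left (h1.trans h2) (pow_nonneg hγ0 t)
      _ = _ := by ring
  -- visitation
  set v := visitation P πstar μ γ with hv
  have hvs : ∀ s, v s = (1 - γ) * ∑' t, γ ^ t * ds t s := fun s => rfl
  have hv0 : ∀ s, 0 ≤ v s := fun s => by
    rw [hvs]
    exact mul_nonneg hg.le (tsum_nonneg fun t => mul_nonneg (pow_nonneg hγ0 t) (hd0 t s))
  have hv1 : ∑ s, v s = 1 := by
    simp only [hvs]
    rw [← Finset.mul_sum, ← Summable.tsum_finsetSum (fun s _ => hdss s)]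
    simp only [← Finset.mul_sum, hd1, mul_one]
    rw [tsum_geometric_of_lt_one hγ0 hγ1]
    field_simp
  have hvD : ∑ s, v s * ε s = (1 - γ) * D := by
    have : D = ∑ s, (∑' t, γ ^ t * ds t s) * ε s := by
      simp only [← tsum_mul_right]
      rw [← Summable.tsum_finsetSum (fun s _ => (hdss s).mul_right _)]
      simp only [hD, hδ, Finset.mul_sum, mul_assoc]
    rw [this, Finset.mul_sum]
    exact Finset.sum_congr rfl fun s _ => by rw [hvs, mul_assoc]
  have hJ : (∑ s, v s * ε s) ^ 2 ≤ 2 * ∑ s, v s * dKL (πstar s) (π s) := by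
    have h1 := Finset.sum_sq_le_sum_mul_sum_of_sq_le_mul (Finset.univ : Finset S)
      (r := fun s => v s * ε s) (f := v) (g := fun s => v s * ε s ^ 2)
      (fun s _ => hv0 s) (fun s _ => mul_nonneg (hv0 s) (sq_nonneg _))
      (fun s _ => le_of_eq (by ring))
    rw [hv1, one_mul] at h1
    refine h1.trans ?_
    rw [Finset.mul_sum]
    refine Finset.sum_le_sum fun s _ => ?_
    rcases (hv0 s).eq_or_lt with h | h
    · rw [← h]; simp
    · have := aux_pinsker (πstar s) (π s) (hπs0 s) (hπ0 s) (hπs1 s) (hπ1 s) (fun a => hpos s a h)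
      have := mul_le_mul_of_nonneg_left this h.le
      linarith
  have hfin := Real.le_sqrt_of_sq_le hJ
  rw [hvD] at hfin
  refine hpd.trans ?_
  have hED : E + D ≤ ((1 - γ) * D) / (1 - γ) ^ 2 := by
    rw [le_div_iff₀ (by positivity)]
    have : (E + D) * (1 - γ) ≤ D := by linarith
    nlinarith
  calc Rmax * (E + D) ≤ Rmax * (((1 - γ) * D) / (1 - γ) ^ 2) :=
        mul_le_mul_of_nonneg_left hED hRmax
    _ = Rmax / (1 - γ) ^ 2 * ((1 - γ) * D) := by ring
    _ ≤ _ := mul_le_mul_of_nonneg_left hfin (by positivity)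
end
end

section
/- Performance difference lemma: For any two policies π1 and π2 in a finite MDP, PerfDiff(π2, π1) ≤ (1/(1−γ)) · Err_{d^{π1}}(π1, π2, R) + (γ R_max/(1−γ)²) · Err_{d^{π1}}(π1, π2, P). -/
open Finset

noncomputable section

variable {S A Z : Type*}

/-- Unnormalized discounted occupancy. -/
def occ [Fintype S] [Fintype A] (P : S → A → S → ℝ) (π : S → A → ℝ)
    (μ : S → ℝ) (γ : ℝ) (s : S) : ℝ := ∑' t : ℕ, γ ^ t * stateDist P π μ t s

theorem sd_props [Fintype S] [Fintype A]
    (P : S → A → S → ℝ) (hP0 : ∀ s a s', 0 ≤ P s a s')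
    (hP1 : ∀ s a, ∑ s' : S, P s a s' = 1)
    (μ : S → ℝ) (hμ0 : ∀ s, 0 ≤ μ s) (hμ1 : ∑ s : S, μ s = 1)
    (π : S → A → ℝ) (h0 : ∀ s a, 0 ≤ π s a) (h1 : ∀ s, ∑ a : A, π s a = 1) (t : ℕ) :
    (∀ s, 0 ≤ stateDist P π μ t s) ∧ ∑ s, stateDist P π μ t s = 1 := by
  induction t with
  | zero => exact ⟨hμ0, hμ1⟩
  | succ t ih =>
    refine ⟨fun s' => ?_, ?_⟩
    · exact Finset.sum_nonneg fun s _ => Finset.sum_nonneg fun a _ =>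
        mul_nonneg (mul_nonneg (h0 s a) (hP0 s a s')) (ih.1 s)
    · simp only [stateDist]
      rw [Finset.sum_comm, ← ih.2]
      refine Finset.sum_congr rfl fun s _ => ?_
      rw [Finset.sum_comm]
      simp only [← Finset.sum_mul, ← Finset.mul_sum, hP1, mul_one, h1, one_mul]

theorem sd_summable [Fintype S] [Fintype A]
    (P : S → A → S → ℝ) (hP0 : ∀ s a s', 0 ≤ P s a s')
    (hP1 : ∀ s a, ∑ s' : S, P s a s' = 1)
    (μ : S → ℝ) (hμ0 : ∀ s, 0 ≤ μ s) (hμ1 : ∑ s : S, μ s = 1)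
    (γ : ℝ) (hγ0 : 0 ≤ γ) (hγ1 : γ < 1)
    (π : S → A → ℝ) (h0 : ∀ s a, 0 ≤ π s a) (h1 : ∀ s, ∑ a : A, π s a = 1) (s : S) :
    Summable fun t : ℕ => γ ^ t * stateDist P π μ t s := by
  have hp := sd_props P hP0 hP1 μ hμ0 hμ1 π h0 h1
  refine Summable.of_nonneg_of_le (fun t => mul_nonneg (pow_nonneg hγ0 t) ((hp t).1 s))
    (fun t => ?_) (summable_geometric_of_lt_one hγ0 hγ1)
  have : stateDist P π μ t s ≤ 1 := by
    rw [← (hp t).2]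
    exact Finset.single_le_sum (fun i _ => (hp t).1 i) (Finset.mem_univ s)
  exact mul_le_of_le_one_right (pow_nonneg hγ0 t) this

theorem perf_eq [Fintype S] [Fintype A]
    (P : S → A → S → ℝ) (R : S → A → ℝ) (μ : S → ℝ) (γ : ℝ) (π : S → A → ℝ)
    (hs : ∀ s, Summable fun t : ℕ => γ ^ t * stateDist P π μ t s) :
    perf P R π μ γ = ∑ s, occ P π μ γ s * ∑ a, π s a * R s a := by
  have h : HasSum (fun t : ℕ => ∑ s, (γ ^ t * stateDist P π μ t s) * ∑ a, π s a * R s a)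
      (∑ s, occ P π μ γ s * ∑ a, π s a * R s a) :=
    hasSum_sum fun s _ => (hs s).hasSum.mul_right _
  rw [← h.tsum_eq]
  unfold perf
  refine tsum_congr fun t => ?_
  simp only [Finset.mul_sum]
  refine Finset.sum_congr rfl fun s _ => Finset.sum_congr rfl fun a _ => ?_
  ring

theorem occ_eq [Fintype S] [Fintype A]
    (P : S → A → S → ℝ) (μ : S → ℝ) (γ : ℝ) (π : S → A → ℝ)
    (hs : ∀ s, Summable fun t : ℕ => γ ^ t * stateDist P π μ t s) (s' : S) :
    occ P π μ γ s' = μ s' + γ * ∑ s, occ P π μ γ s * ∑ a, π s a * P s a s' := by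
  have h : HasSum (fun t : ℕ => γ * ∑ s, (γ ^ t * stateDist P π μ t s) * ∑ a, π s a * P s a s')
      (γ * ∑ s, occ P π μ γ s * ∑ a, π s a * P s a s') :=
    (hasSum_sum fun s _ => (hs s).hasSum.mul_right _).mul_left _
  rw [← h.tsum_eq]
  unfold occ
  rw [(hs s').tsum_eq_zero_add]
  congr 1
  · simp [stateDist]
  · refine tsum_congr fun t => ?_
    simp only [stateDist, Finset.mul_sum]
    refine Finset.sum_congr rfl fun s _ => Finset.sum_congr rfl fun a _ => ?_
    ring

theorem performance_difference_lemma [Fintype S] [Fintype A] [Nonempty S] [Nonempty A]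
    (P : S → A → S → ℝ) (hP0 : ∀ s a s', 0 ≤ P s a s')
    (hP1 : ∀ s a, ∑ s' : S, P s a s' = 1)
    (R : S → A → ℝ) (Rmax : ℝ) (hRmax : 0 ≤ Rmax) (hR : ∀ s a, |R s a| ≤ Rmax)
    (μ : S → ℝ) (hμ0 : ∀ s, 0 ≤ μ s) (hμ1 : ∑ s : S, μ s = 1)
    (γ : ℝ) (hγ0 : 0 ≤ γ) (hγ1 : γ < 1)
    (π1 π2 : S → A → ℝ)
    (hπ10 : ∀ s a, 0 ≤ π1 s a) (hπ11 : ∀ s, ∑ a : A, π1 s a = 1)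
    (hπ20 : ∀ s a, 0 ≤ π2 s a) (hπ21 : ∀ s, ∑ a : A, π2 s a = 1) :
    perfDiff P R μ γ π2 π1 ≤
      (1 / (1 - γ)) * errF (visitation P π1 μ γ) π1 π2 R
        + (γ * Rmax / (1 - γ) ^ 2) * errG (visitation P π1 μ γ) π1 π2 P := by
  have hs1 := sd_summable P hP0 hP1 μ hμ0 hμ1 γ hγ0 hγ1 π1 hπ10 hπ11
  have hs2 := sd_summable P hP0 hP1 μ hμ0 hμ1 γ hγ0 hγ1 π2 hπ20 hπ21
  have hg : 0 < 1 - γ := by linarith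
  have hv : visitation P π1 μ γ = fun s => (1 - γ) * occ P π1 μ γ s := rfl
  have hF : (1 / (1 - γ)) * errF (visitation P π1 μ γ) π1 π2 R
      = |∑ s, occ P π1 μ γ s * ∑ a, (π1 s a - π2 s a) * R s a| := by
    rw [hv, errF]
    simp only [mul_assoc]
    rw [← Finset.mul_sum, abs_mul, abs_of_pos hg, ← mul_assoc, one_div_mul_cancel hg.ne', one_mul]
  have hG : errG (visitation P π1 μ γ) π1 π2 P
      = (1 - γ) * ∑ s', |∑ s, occ P π1 μ γ s * ∑ a, (π1 s a - π2 s a) * P s a s'| := by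
    rw [hv, errG, Finset.mul_sum]
    refine Finset.sum_congr rfl fun s' _ => ?_
    simp only [mul_assoc]
    rw [← Finset.mul_sum, abs_mul, abs_of_pos hg]
  have ho1 := occ_eq P μ γ π1 hs1
  have ho2 := occ_eq P μ γ π2 hs2
  rw [perfDiff, perf_eq P R μ γ π1 hs1, perf_eq P R μ γ π2 hs2, hF, hG]
  generalize occ P π1 μ γ = x at *
  generalize occ P π2 μ γ = y at *
  set E := ∑ s', |∑ s, x s * ∑ a, (π1 s a - π2 s a) * P s a s'| with hE
  set N := ∑ s, |y s - x s| with hN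
  have hkey : N ≤ γ * N + γ * E := by
    have h1 : ∀ s', |y s' - x s'| ≤ γ * (∑ s, |y s - x s| * ∑ a, π2 s a * P s a s')
        + γ * |∑ s, x s * ∑ a, (π1 s a - π2 s a) * P s a s'| := by
      intro s'
      have e : y s' - x s' = γ * (∑ s, (y s - x s) * ∑ a, π2 s a * P s a s')
        - γ * ∑ s, x s * ∑ a, (π1 s a - π2 s a) * P s a s' := by
        rw [ho1 s', ho2 s']
        simp only [sub_mul, Finset.sum_sub_distrib, mul_sub]
        ring
      rw [e]
      refine (abs_sub _ _).trans ?_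
      rw [abs_mul, abs_mul, abs_of_nonneg hγ0]
      gcongr
      refine (Finset.abs_sum_le_sum_abs _ _).trans (Finset.sum_le_sum fun s _ => ?_)
      rw [abs_mul, abs_of_nonneg (a := ∑ a, π2 s a * P s a s')
        (Finset.sum_nonneg fun a _ => mul_nonneg (hπ20 s a) (hP0 s a s'))]
    have h2 := Finset.sum_le_sum fun s' (_ : s' ∈ (Finset.univ : Finset S)) => h1 s'
    rw [Finset.sum_add_distrib, ← Finset.mul_sum, ← Finset.mul_sum, Finset.sum_comm] at h2
    have h3 : ∑ s, ∑ s', |y s - x s| * ∑ a, π2 s a * P s a s' = N := by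
      refine Finset.sum_congr rfl fun s _ => ?_
      rw [← Finset.mul_sum, Finset.sum_comm]
      simp only [← Finset.mul_sum, hP1, mul_one, hπ21]
    rw [h3] at h2
    exact h2
  have hNE : N ≤ γ * E / (1 - γ) := by
    rw [le_div_iff₀ hg]; linarith
  have hr : ∀ s, |∑ a, π2 s a * R s a| ≤ Rmax := by
    intro s
    calc |∑ a, π2 s a * R s a| ≤ ∑ a, |π2 s a * R s a| := Finset.abs_sum_le_sum_abs _ _
      _ ≤ ∑ a, π2 s a * Rmax := by
        refine Finset.sum_le_sum fun a _ => ?_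
        rw [abs_mul, abs_of_nonneg (hπ20 s a)]
        exact mul_le_mul_of_nonneg_left (hR s a) (hπ20 s a)
      _ = Rmax := by rw [← Finset.sum_mul, hπ21, one_mul]
  have hA : |∑ s, (y s - x s) * ∑ a, π2 s a * R s a| ≤ N * Rmax := by
    refine (Finset.abs_sum_le_sum_abs _ _).trans ?_
    rw [hN, Finset.sum_mul]
    refine Finset.sum_le_sum fun s _ => ?_
    rw [abs_mul]
    exact mul_le_mul_of_nonneg_left (hr s) (abs_nonneg _)
  have e : (∑ s, y s * ∑ a, π2 s a * R s a) - ∑ s, x s * ∑ a, π1 s a * R s a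
      = (∑ s, (y s - x s) * ∑ a, π2 s a * R s a)
        - ∑ s, x s * ∑ a, (π1 s a - π2 s a) * R s a := by
    simp only [sub_mul, Finset.sum_sub_distrib, mul_sub]
    ring
  rw [e]
  have hfin : γ * Rmax / (1 - γ) ^ 2 * ((1 - γ) * E) = γ * E / (1 - γ) * Rmax := by
    field_simp
  rw [hfin]
  have := mul_le_mul_of_nonneg_right hNE hRmax
  refine (abs_sub _ _).trans ?_
  linarith
end
end

section
/- Representation bottleneck lemma: Let π1 and π2 be policies in a finite MDP, Z a finite set, φ : S → Z, R_Z : Z×A → [−R_max, R_max], and P_Z a function where P_Z(·|z,a) is a probability distribution on S for every (z,a). Define R̄(s,a) = R_Z(φ(s),a) and P̄(s'|s,a) = P_Z(s'|φ(s),a). Then Err_{d^{π1}}(π1, π2, R̄) ≤ 2 R_max · ∑_{z∈Z} d^{π1}_Z(z) · D_TV(π_{1,Z}(·|z) ‖ π_{2,Z}(·|z)) and Err_{d^{π1}}(π1, π2, P̄) ≤ 2 · ∑_{z∈Z} d^{π1}_Z(z) · D_TV(π_{1,Z}(·|z) ‖ π_{2,Z}(·|z)), where d^{π1}_Z and π_{k,Z}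 (k=1,2) are the marginalizations onto Z with respect to d^{π1}. -/
open Finset

noncomputable section

variable {S A Z : Type*}

theorem rb_stateDist_nonneg [Fintype S] [Fintype A] (P : S → A → S → ℝ) (π : S → A → ℝ)
    (μ : S → ℝ) (hP0 : ∀ s a s', 0 ≤ P s a s') (hπ : ∀ s a, 0 ≤ π s a) (hμ0 : ∀ s, 0 ≤ μ s)
    (t : ℕ) : ∀ s, 0 ≤ stateDist P π μ t s := by
  induction t with
  | zero => intro s; simpa [stateDist] using hμ0 s
  | succ t ih =>
    intro s
    simp only [stateDist]
    exact Finset.sum_nonneg fun s' _ => Finset.sum_nonneg fun a _ =>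
      mul_nonneg (mul_nonneg (hπ _ _) (hP0 _ _ _)) (ih _)

theorem rb_visitation_nonneg [Fintype S] [Fintype A] (P : S → A → S → ℝ) (π : S → A → ℝ)
    (μ : S → ℝ) (hP0 : ∀ s a s', 0 ≤ P s a s') (hπ : ∀ s a, 0 ≤ π s a) (hμ0 : ∀ s, 0 ≤ μ s)
    (γ : ℝ) (hγ0 : 0 ≤ γ) (hγ1 : γ < 1) (s : S) : 0 ≤ visitation P π μ γ s :=
  mul_nonneg (by linarith) (tsum_nonneg fun t =>
    mul_nonneg (pow_nonneg hγ0 t) (rb_stateDist_nonneg P π μ hP0 hπ hμ0 t s))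

theorem rb_margDist_nonneg [Fintype S] [DecidableEq Z] (φ : S → Z) (ρ : S → ℝ)
    (hρ : ∀ s, 0 ≤ ρ s) (z : Z) : 0 ≤ margDist φ ρ z := by
  refine Finset.sum_nonneg fun s _ => ?_
  split_ifs
  · exact hρ s
  · exact le_rfl

theorem rb_marg_mul [Fintype S] [DecidableEq Z] (φ : S → Z) (ρ : S → ℝ)
    (hρ : ∀ s, 0 ≤ ρ s) (π : S → A → ℝ) (z : Z) (a : A) :
    margDist φ ρ z * margPolicy φ ρ π z a = ∑ s : S, if φ s = z then ρ s * π s a else 0 := by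
  unfold margPolicy
  by_cases h : margDist φ ρ z = 0
  · rw [h, zero_mul]
    symm
    refine Finset.sum_eq_zero fun s _ => ?_
    have h2 := (Finset.sum_eq_zero_iff_of_nonneg (fun s _ => by
      split_ifs
      · exact hρ s
      · exact le_rfl)).1 h s (Finset.mem_univ s)
    split_ifs with hz
    · rw [if_pos hz] at h2
      rw [h2, zero_mul]
    · rfl
  · field_simp

theorem rb_sum_eq [Fintype S] [Fintype A] [Fintype Z] [DecidableEq Z] (φ : S → Z) (ρ : S → ℝ)
    (hρ : ∀ s, 0 ≤ ρ s) (π1 π2 : S → A → ℝ) (F : Z → A → ℝ) :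
    ∑ s : S, ρ s * ∑ a : A, (π1 s a - π2 s a) * F (φ s) a =
    ∑ z : Z, ∑ a : A, margDist φ ρ z *
      (margPolicy φ ρ π1 z a - margPolicy φ ρ π2 z a) * F z a := by
  simp only [mul_sub, rb_marg_mul φ ρ hρ, ← Finset.sum_sub_distrib, Finset.sum_mul]
  have : ∀ z : Z, ∑ a : A, ∑ s : S, ((if φ s = z then ρ s * π1 s a else 0) -
      (if φ s = z then ρ s * π2 s a else 0)) * F z a =
      ∑ s : S, if φ s = z then ρ s * ∑ a : A, (π1 s a - π2 s a) * F (φ s) a else 0 := by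
    intro z
    rw [Finset.sum_comm]
    refine Finset.sum_congr rfl fun s _ => ?_
    split_ifs with h
    · rw [Finset.mul_sum]
      refine Finset.sum_congr rfl fun a _ => ?_
      rw [h]; ring
    · simp
  rw [Finset.sum_congr rfl fun z _ => this z, Finset.sum_comm]
  simp

theorem rb_abs_le [Fintype S] [Fintype A] [Fintype Z] [DecidableEq Z] (φ : S → Z) (ρ : S → ℝ)
    (hρ : ∀ s, 0 ≤ ρ s) (π1 π2 : S → A → ℝ) (F : Z → A → ℝ) :
    |∑ s : S, ρ s * ∑ a : A, (π1 s a - π2 s a) * F (φ s) a| ≤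
    ∑ z : Z, ∑ a : A, margDist φ ρ z *
      |margPolicy φ ρ π1 z a - margPolicy φ ρ π2 z a| * |F z a| := by
  rw [rb_sum_eq φ ρ hρ]
  refine (Finset.abs_sum_le_sum_abs _ _).trans (Finset.sum_le_sum fun z _ => ?_)
  refine (Finset.abs_sum_le_sum_abs _ _).trans (Finset.sum_le_sum fun a _ => ?_)
  rw [abs_mul, abs_mul, abs_of_nonneg (rb_margDist_nonneg φ ρ hρ z)]

theorem rb_tv [Fintype S] [Fintype A] [Fintype Z] [DecidableEq Z] (φ : S → Z) (ρ : S → ℝ)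
    (π1 π2 : S → A → ℝ) :
    2 * ∑ z : Z, margDist φ ρ z * dTV (margPolicy φ ρ π1 z) (margPolicy φ ρ π2 z) =
    ∑ z : Z, ∑ a : A, margDist φ ρ z *
      |margPolicy φ ρ π1 z a - margPolicy φ ρ π2 z a| := by
  rw [Finset.mul_sum]
  refine Finset.sum_congr rfl fun z _ => ?_
  rw [← Finset.mul_sum]
  unfold dTV
  ring

theorem representation_bottleneck_lemma
    [Fintype S] [Fintype A] [Fintype Z] [Nonempty S] [Nonempty A] [DecidableEq Z]
    (P : S → A → S → ℝ) (hP0 : ∀ s a s', 0 ≤ P s a s')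
    (hP1 : ∀ s a, ∑ s' : S, P s a s' = 1)
    (R : S → A → ℝ) (Rmax : ℝ) (hRmax : 0 ≤ Rmax) (hR : ∀ s a, |R s a| ≤ Rmax)
    (μ : S → ℝ) (hμ0 : ∀ s, 0 ≤ μ s) (hμ1 : ∑ s : S, μ s = 1)
    (γ : ℝ) (hγ0 : 0 ≤ γ) (hγ1 : γ < 1)
    (π1 π2 : S → A → ℝ)
    (hπ10 : ∀ s a, 0 ≤ π1 s a) (hπ11 : ∀ s, ∑ a : A, π1 s a = 1)
    (hπ20 : ∀ s a, 0 ≤ π2 s a) (hπ21 : ∀ s, ∑ a : A, π2 s a = 1)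
    (φ : S → Z)
    (RZ : Z → A → ℝ) (hRZ : ∀ z a, |RZ z a| ≤ Rmax)
    (PZ : Z → A → S → ℝ) (hPZ0 : ∀ z a s', 0 ≤ PZ z a s')
    (hPZ1 : ∀ z a, ∑ s' : S, PZ z a s' = 1) :
    errF (visitation P π1 μ γ) π1 π2 (fun s a => RZ (φ s) a) ≤
        2 * Rmax * ∑ z : Z, margDist φ (visitation P π1 μ γ) z *
          dTV (margPolicy φ (visitation P π1 μ γ) π1 z)
            (margPolicy φ (visitation P π1 μ γ) π2 z) ∧
      errG (visitation P π1 μ γ) π1 π2 (fun s a s' => PZ (φ s) a s') ≤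
        2 * ∑ z : Z, margDist φ (visitation P π1 μ γ) z *
          dTV (margPolicy φ (visitation P π1 μ γ) π1 z)
            (margPolicy φ (visitation P π1 μ γ) π2 z) := by
  have hρ := rb_visitation_nonneg P π1 μ hP0 hπ10 hμ0 γ hγ0 hγ1
  generalize visitation P π1 μ γ = ρ at hρ ⊢
  constructor
  · refine (rb_abs_le φ ρ hρ π1 π2 RZ).trans ?_
    rw [mul_comm 2 Rmax, mul_assoc, rb_tv, Finset.mul_sum]
    refine Finset.sum_le_sum fun z _ => ?_
    rw [Finset.mul_sum]
    refine Finset.sum_le_sum fun a _ => ?_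
    rw [mul_comm Rmax]
    exact mul_le_mul_of_nonneg_left (hRZ z a)
      (mul_nonneg (rb_margDist_nonneg φ ρ hρ z) (abs_nonneg _))
  · unfold errG
    refine (Finset.sum_le_sum fun s' _ =>
      rb_abs_le φ ρ hρ π1 π2 (fun z a => PZ z a s')).trans ?_
    rw [rb_tv, Finset.sum_comm]
    refine Finset.sum_le_sum fun z _ => ?_
    rw [Finset.sum_comm]
    refine Finset.sum_le_sum fun a _ => ?_
    rw [← Finset.mul_sum, Finset.sum_congr rfl fun s' _ => abs_of_nonneg (hPZ0 z a s'),
      hPZ1, mul_one]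
end
end

section
/- Expected total-variation error of the empirical distribution: Let ρ be a probability distribution on a finite set X with |X| = k, and let X_1, …, X_n be independent random variables each with law ρ. Let ρ̂_n be the empirical distribution, ρ̂_n(x) = (1/n)·#{j ∈ {1,…,n} : X_j = x}. Then E[D_TV(ρ ‖ ρ̂_n)] ≤ (1/(2√n)) ∑_{x∈X} √(ρ(x)) ≤ (1/2)·√(k/n). -/
open Finset

noncomputable section

variable {S A Z : Type*}

theorem emp_sum_cons {X : Type*} [Fintype X] (n : ℕ) (F : (Fin (n + 1) → X) → ℝ) :
    ∑ ω, F ω = ∑ a : X, ∑ ω : Fin n → X, F (Fin.cons a ω) := by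
  rw [← (Fin.consEquiv (fun _ : Fin (n + 1) => X)).sum_comp, Fintype.sum_prod_type]
  rfl

theorem emp_moments {X : Type*} [Fintype X] (ρ f : X → ℝ) (hρ1 : ∑ x : X, ρ x = 1)
    (hf : ∑ x : X, ρ x * f x = 0) (n : ℕ) :
    (∑ ω : Fin n → X, ∏ j, ρ (ω j)) = 1 ∧
    (∑ ω : Fin n → X, (∏ j, ρ (ω j)) * ∑ j, f (ω j)) = 0 ∧
    (∑ ω : Fin n → X, (∏ j, ρ (ω j)) * (∑ j, f (ω j)) ^ 2) = n * ∑ x, ρ x * f x ^ 2 := by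
  induction n with
  | zero => simp
  | succ n ih =>
    obtain ⟨h0, h1, h2⟩ := ih
    refine ⟨?_, ?_, ?_⟩
    · rw [emp_sum_cons]
      simp only [Fin.prod_univ_succ, Fin.cons_zero, Fin.cons_succ, ← Finset.mul_sum, h0, mul_one,
        hρ1]
    · rw [emp_sum_cons]
      simp only [Fin.prod_univ_succ, Fin.sum_univ_succ, Fin.cons_zero, Fin.cons_succ]
      have : ∀ a : X, ∑ ω : Fin n → X, ρ a * (∏ j, ρ (ω j)) * (f a + ∑ j, f (ω j))
          = ρ a * f a := by
        intro a
        calc _ = ρ a * f a * (∑ ω : Fin n → X, ∏ j, ρ (ω j))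
              + ρ a * ∑ ω : Fin n → X, (∏ j, ρ (ω j)) * ∑ j, f (ω j) := by
                rw [Finset.mul_sum, Finset.mul_sum, ← Finset.sum_add_distrib]
                exact Finset.sum_congr rfl fun _ _ => by ring
          _ = _ := by rw [h0, h1]; ring
      simp only [this, hf]
    · rw [emp_sum_cons]
      simp only [Fin.prod_univ_succ, Fin.sum_univ_succ, Fin.cons_zero, Fin.cons_succ]
      have : ∀ a : X, ∑ ω : Fin n → X, ρ a * (∏ j, ρ (ω j)) * (f a + ∑ j, f (ω j)) ^ 2
          = ρ a * f a ^ 2 + ρ a * (n * ∑ x, ρ x * f x ^ 2) := by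
        intro a
        calc _ = ρ a * f a ^ 2 * (∑ ω : Fin n → X, ∏ j, ρ (ω j))
              + 2 * ρ a * f a * (∑ ω : Fin n → X, (∏ j, ρ (ω j)) * ∑ j, f (ω j))
              + ρ a * ∑ ω : Fin n → X, (∏ j, ρ (ω j)) * (∑ j, f (ω j)) ^ 2 := by
                rw [Finset.mul_sum, Finset.mul_sum, Finset.mul_sum, ← Finset.sum_add_distrib,
                  ← Finset.sum_add_distrib]
                exact Finset.sum_congr rfl fun _ _ => by ring
          _ = _ := by rw [h0, h1, h2]; ring
      simp only [this, Finset.sum_add_distrib, ← Finset.sum_mul, hρ1]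
      push_cast
      ring

theorem emp_point {X : Type*} [Fintype X] [DecidableEq X] (n : ℕ) (hn : 0 < n)
    (ρ : X → ℝ) (hρ0 : ∀ x, 0 ≤ ρ x) (hρ1 : ∑ x : X, ρ x = 1) (x : X) :
    (∑ ω : Fin n → X, (∏ j : Fin n, ρ (ω j)) *
      |ρ x - ((univ.filter fun j : Fin n => ω j = x).card : ℝ) / n|) ≤
      Real.sqrt (ρ x) / Real.sqrt n := by
  have hn' : (0 : ℝ) < n := by exact_mod_cast hn
  set f : X → ℝ := fun a => ρ x - if a = x then 1 else 0 with hfdef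
  have hf : ∑ a, ρ a * f a = 0 := by
    simp [hfdef, mul_sub, Finset.sum_sub_distrib, ← Finset.sum_mul, hρ1]
  have hf2 : ∑ a, ρ a * f a ^ 2 ≤ ρ x := by
    have : ∀ a, ρ a * f a ^ 2 = ρ a * ρ x ^ 2 + (if a = x then ρ a * (1 - 2 * ρ x) else 0) := by
      intro a
      simp only [hfdef]
      split_ifs <;> ring
    simp only [this, Finset.sum_add_distrib, ← Finset.sum_mul, hρ1, Finset.sum_ite_eq',
      Finset.sum_ite_eq, Finset.mem_univ, if_true]
    nlinarith [sq_nonneg (ρ x)]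
  obtain ⟨h0, -, h2⟩ := emp_moments ρ f hρ1 hf n
  have hdev : ∀ ω : Fin n → X, ρ x - ((univ.filter fun j : Fin n => ω j = x).card : ℝ) / n
      = (∑ j, f (ω j)) / n := by
    intro ω
    simp only [hfdef, Finset.sum_sub_distrib, Finset.sum_boole, Finset.sum_const,
      Finset.card_univ, Fintype.card_fin, nsmul_eq_mul]
    field_simp
  rw [← Real.sqrt_div (hρ0 x)]
  apply Real.le_sqrt_of_sq_le
  have hw : ∀ ω : Fin n → X, 0 ≤ ∏ j, ρ (ω j) := fun ω => Finset.prod_nonneg fun j _ => hρ0 _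
  have key := Finset.sum_sq_le_sum_mul_sum_of_sq_eq_mul (univ : Finset (Fin n → X))
    (r := fun ω => (∏ j, ρ (ω j)) * |(∑ j, f (ω j)) / n|)
    (f := fun ω => ∏ j, ρ (ω j)) (g := fun ω => (∏ j, ρ (ω j)) * ((∑ j, f (ω j)) / n) ^ 2)
    (fun ω _ => hw ω) (fun ω _ => mul_nonneg (hw ω) (sq_nonneg _))
    (fun ω _ => by rw [mul_pow, sq_abs]; ring)
  simp only [hdev]
  refine key.trans ?_
  rw [h0, one_mul]
  simp only [div_pow, ← mul_div_assoc, ← Finset.sum_div]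
  rw [h2, div_le_div_iff₀ (by positivity) hn']
  nlinarith [mul_le_mul_of_nonneg_left hf2 (sq_nonneg (n : ℝ))]

theorem expected_tv_error_of_empirical_distribution
    {X : Type*} [Fintype X] [DecidableEq X]
    (n : ℕ) (hn : 0 < n)
    (ρ : X → ℝ) (hρ0 : ∀ x, 0 ≤ ρ x) (hρ1 : ∑ x : X, ρ x = 1) :
    (∑ ω : Fin n → X, (∏ j : Fin n, ρ (ω j)) *
          dTV ρ (fun x => ((univ.filter fun j : Fin n => ω j = x).card : ℝ) / n)) ≤
        1 / (2 * Real.sqrt n) * ∑ x : X, Real.sqrt (ρ x) ∧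
      1 / (2 * Real.sqrt n) * ∑ x : X, Real.sqrt (ρ x) ≤
        (1 / 2) * Real.sqrt ((Fintype.card X : ℝ) / n) := by
  have hn' : (0 : ℝ) < n := by exact_mod_cast hn
  constructor
  · calc _ = (1 / 2) * ∑ x : X, ∑ ω : Fin n → X, (∏ j : Fin n, ρ (ω j)) *
          |ρ x - ((univ.filter fun j : Fin n => ω j = x).card : ℝ) / n| := by
          rw [Finset.sum_comm, Finset.mul_sum]
          refine Finset.sum_congr rfl fun ω _ => ?_
          rw [dTV, ← Finset.mul_sum]
          ring
      _ ≤ (1 / 2) * ∑ x : X, Real.sqrt (ρ x) / Real.sqrt n := by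
          gcongr with x
          exact emp_point n hn ρ hρ0 hρ1 x
      _ = _ := by
          rw [← Finset.sum_div]
          field_simp
  · have h : ∑ x : X, Real.sqrt (ρ x) ≤ Real.sqrt (Fintype.card X) := by
      apply Real.le_sqrt_of_sq_le
      refine (sq_sum_le_card_mul_sum_sq).trans ?_
      simp only [Real.sq_sqrt (hρ0 _), hρ1, mul_one, Finset.card_univ, le_refl]
    rw [Real.sqrt_div (Nat.cast_nonneg _)]
    calc _ ≤ 1 / (2 * Real.sqrt n) * Real.sqrt (Fintype.card X) := by gcongr
      _ = _ := by field_simp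
end
end

section
/- Conditional total-variation decomposition: Let S and A be nonempty finite sets, and let x and x̂ be probability distributions on S×A with marginals ρ(s) = ∑_a x(s,a) and ρ̂(s) = ∑_a x̂(s,a), and conditionals π(a|s) = x(s,a)/ρ(s) for s with ρ(s) > 0 and π̂(a|s) = x̂(s,a)/ρ̂(s) for s with ρ̂(s) > 0. Assume ρ̂(s) > 0 whenever ρ(s) > 0. Then ∑_{s∈S} ρ(s) · D_TV(π(·|s) ‖ π̂(·|s)) ≤ D_TV(ρ ‖ ρ̂) + D_TV(x ‖ x̂). -/
open Finset

noncomputable section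

variable {S A Z : Type*}

theorem conditional_tv_decomposition [Fintype S] [Fintype A] [Nonempty S] [Nonempty A]
    (x xh : S × A → ℝ)
    (hx0 : ∀ p, 0 ≤ x p) (hx1 : ∑ p : S × A, x p = 1)
    (hxh0 : ∀ p, 0 ≤ xh p) (hxh1 : ∑ p : S × A, xh p = 1)
    (hsupp : ∀ s, 0 < ∑ a : A, x (s, a) → 0 < ∑ a : A, xh (s, a)) :
    ∑ s : S, (∑ a : A, x (s, a)) *
        dTV (fun a => x (s, a) / ∑ b : A, x (s, b))
          (fun a => xh (s, a) / ∑ b : A, xh (s, b)) ≤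
      dTV (fun s => ∑ a : A, x (s, a)) (fun s => ∑ a : A, xh (s, a)) + dTV x xh := by
  have key : ∀ s : S, (∑ a : A, x (s, a)) *
      ∑ a : A, |x (s, a) / (∑ b : A, x (s, b)) - xh (s, a) / ∑ b : A, xh (s, b)| ≤
      |(∑ a : A, x (s, a)) - ∑ a : A, xh (s, a)| + ∑ a : A, |x (s, a) - xh (s, a)| := by
    intro s
    have h0 : 0 ≤ ∑ a : A, x (s, a) := Finset.sum_nonneg fun a _ => hx0 _
    have hs := hsupp s
    have hsum : ∑ a : A, xh (s, a) / (∑ b : A, xh (s, b)) =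
        (∑ a : A, xh (s, a)) / (∑ b : A, xh (s, b)) := (Finset.sum_div _ _ _).symm
    rcases h0.eq_or_lt with h | h
    · rw [← h, zero_mul]
      positivity
    · have hh := hs h
      rw [div_self hh.ne'] at hsum
      generalize hr : ∑ a : A, x (s, a) = r at *
      generalize hrh : ∑ a : A, xh (s, a) = rh at *
      calc r * ∑ a : A, |x (s, a) / r - xh (s, a) / rh|
          = ∑ a : A, r * |x (s, a) / r - xh (s, a) / rh| := Finset.mul_sum _ _ _
        _ ≤ ∑ a : A, (xh (s, a) / rh * |r - rh| + |x (s, a) - xh (s, a)|) := by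
            refine Finset.sum_le_sum fun a _ => ?_
            have e : r * (x (s, a) / r - xh (s, a) / rh) =
                -(xh (s, a) / rh * (r - rh)) + (x (s, a) - xh (s, a)) := by
              field_simp
              ring
            have hn : 0 ≤ xh (s, a) / rh := div_nonneg (hxh0 _) hh.le
            calc r * |x (s, a) / r - xh (s, a) / rh|
                = |r * (x (s, a) / r - xh (s, a) / rh)| := by
                  rw [abs_mul, abs_of_pos h]
              _ ≤ |-(xh (s, a) / rh * (r - rh))| + |x (s, a) - xh (s, a)| := by
                  rw [e]
                  exact abs_add_le _ _
              _ = _ := by rw [abs_neg, abs_mul, abs_of_nonneg hn]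
        _ = |r - rh| + ∑ a : A, |x (s, a) - xh (s, a)| := by
            rw [Finset.sum_add_distrib, ← Finset.sum_mul, hsum, one_mul]
  have tot := Finset.sum_le_sum fun s (_ : s ∈ Finset.univ) => key s
  rw [Finset.sum_add_distrib] at tot
  simp only [dTV]
  rw [Fintype.sum_prod_type]
  have e : ∀ s : S, (∑ a : A, x (s, a)) * (1 / 2 *
      ∑ a : A, |x (s, a) / (∑ b : A, x (s, b)) - xh (s, a) / ∑ b : A, xh (s, b)|) =
      1 / 2 * ((∑ a : A, x (s, a)) *
      ∑ a : A, |x (s, a) / (∑ b : A, x (s, b)) - xh (s, a) / ∑ b : A, xh (s, b)|) :=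
    fun s => by ring
  rw [Finset.sum_congr rfl fun s _ => e s, ← Finset.mul_sum]
  linarith
end
end
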